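/- Let g : ℝⁿ × ℝᵏ → ℝ be twice continuously differentiable in a neighborhood of a point (x̄, θ̄). Suppose that the partial derivative of g with respect to the second variable vanishes at (x̄, θ̄) (i.e., Dg(x̄, θ̄)(0, w) = 0 for all w ∈ ℝᵏ), and that the partial Hessian of g in the second variable at (x̄, θ̄) is positive definite (i.e., D²g(x̄, θ̄)((0, w), (0, w)) > 0 for all w ≠ 0). Then there exist open neighborhoods U of x̄ and V of θ̄ and a continuously differentiable map h : ℝⁿ → ℝᵏ with h(x̄) = θ̄ such that for every x ∈ U one has h(x) ∈ V and h(x) is the unique minimizer of θ ↦ g(x, θ) over V (that is, g(x, h(x)) < g(x, θ) for all θ ∈ V with θ ≠ h(x)). -/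

import Mathlib

theorem aux {E₁ E₂ : Type} [NormedAddCommGroup E₁] [InnerProductSpace ℝ E₁]
    [FiniteDimensional ℝ E₁] [NormedAddCommGroup E₂] [InnerProductSpace ℝ E₂]
    [FiniteDimensional ℝ E₂]
    (g : E₁ × E₂ → ℝ)
    (x₀ : E₁) (θ₀ : E₂)
    (hg : ContDiffAt ℝ 2 g (x₀, θ₀))
    (hcrit : ∀ w : E₂, fderiv ℝ g (x₀, θ₀) (0, w) = 0)
    (hpos : ∀ w : E₂, w ≠ 0 →
      0 < fderiv ℝ (fderiv ℝ g) (x₀, θ₀) (0, w) (0, w)) :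
    ∃ (U : Set (E₁)) (V : Set (E₂))
      (h : E₁ → E₂),
      IsOpen U ∧ x₀ ∈ U ∧ IsOpen V ∧ θ₀ ∈ V ∧
      ContDiff ℝ 1 h ∧ h x₀ = θ₀ ∧
      ∀ x ∈ U, h x ∈ V ∧ ∀ θ ∈ V, θ ≠ h x → g (x, h x) < g (x, θ) := by
  classical
  let u : E₁ × E₂ := (x₀, θ₀)
  obtain ⟨R, hR⟩ : ∃ R : (E₁ × E₂ →L[ℝ] ℝ) →L[ℝ] (E₂ →L[ℝ] ℝ), ∀ L w, R L w = L (0, w) :=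
    ⟨(ContinuousLinearMap.compL ℝ E₂ (E₁ × E₂) ℝ).flip (.inr ℝ E₁ E₂), fun _ _ => rfl⟩
  let F : E₁ × E₂ → (E₂ →L[ℝ] ℝ) := fun p => R (fderiv ℝ g p)
  have hF_apply : ∀ p w, F p w = fderiv ℝ g p (0, w) := fun p w => hR _ _
  have hdg : ContDiffAt ℝ 1 (fderiv ℝ g) u := hg.fderiv_right (m := 1) (by norm_num)
  have hF : ContDiffAt ℝ 1 F u := by
    have hRC : ContDiff ℝ 1 R := by fun_prop
    have h1 : ContDiffAt ℝ 1 (R ∘ fderiv ℝ g) u :=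
      ContDiffAt.comp u (g := R) hRC.contDiffAt hdg
    exact h1
  have hFd : HasFDerivAt F (R ∘L fderiv ℝ (fderiv ℝ g) u) u :=
    R.hasFDerivAt.comp u (hdg.differentiableAt (by norm_num)).hasFDerivAt
  have hA : ∀ v w, fderiv ℝ F u v w = fderiv ℝ (fderiv ℝ g) u v (0, w) := by
    intro v w; rw [hFd.fderiv]; exact hR _ _
  have hFu : F u = 0 := by ext w; exact (hR _ _).trans (hcrit w)
  -- invertibility
  have hinj : Function.Injective (fderiv ℝ F u ∘L .inr ℝ E₁ E₂) := by
    rw [injective_iff_map_eq_zero]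
    intro w hw
    by_contra hne
    have h1 := hpos w hne
    have h2 : fderiv ℝ F u (0, w) w = 0 := by
      have := congrArg (fun L : E₂ →L[ℝ] ℝ => L w) hw
      simpa using this
    rw [hA] at h2
    exact h1.ne' h2
  have hrank : Module.finrank ℝ E₂ = Module.finrank ℝ (E₂ →L[ℝ] ℝ) := by
    rw [(InnerProductSpace.toDual ℝ E₂).toLinearEquiv.finrank_eq]
  have hinv : (fderiv ℝ F u ∘L .inr ℝ E₁ E₂).IsInvertible := by
    let e := LinearEquiv.ofInjectiveOfFinrankEq
      (fderiv ℝ F u ∘L .inr ℝ E₁ E₂).toLinearMap hinj hrank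
    exact ⟨e.toContinuousLinearEquiv, by ext; rfl⟩
  obtain ⟨ψ, hψ0, hψF, hψC⟩ : ∃ ψ : E₁ → E₂, ψ x₀ = θ₀ ∧ (∀ᶠ x in nhds x₀, F (x, ψ x) = 0) ∧
      ContDiffAt ℝ 1 ψ x₀ := by
    refine ⟨hF.implicitFunction one_ne_zero hinv, hF.implicitFunction_apply_self _ hinv, ?_,
      hF.contDiffAt_implicitFunction _ hinv⟩
    have := hF.eventually_apply_implicitFunction one_ne_zero hinv
    rw [hFu] at this
    exact this
  -- coercivity
  obtain ⟨c, hc, hcoer⟩ : ∃ c : ℝ, 0 < c ∧ ∀ w : E₂, c * ‖w‖ ^ 2 ≤ fderiv ℝ F u (0, w) w := by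
    have hcont : Continuous (fun w : E₂ => fderiv ℝ F u (0, w) w) := by fun_prop
    obtain ⟨c, hc, h⟩ := (isCompact_sphere (0 : E₂) 1).exists_forall_le' hcont.continuousOn
      (a := 0) (fun w hw => by
        rw [hA]
        exact hpos w (by rintro rfl; simp at hw))
    refine ⟨c, hc, fun w => ?_⟩
    by_cases hw : w = 0
    · subst hw; simp
    have hn : ‖w‖ ≠ 0 := norm_ne_zero_iff.2 hw
    have h1 := h (‖w‖⁻¹ • w) (by simp [norm_smul, hn])
    have h2 : ((0 : E₁), ‖w‖⁻¹ • w) = ‖w‖⁻¹ • ((0 : E₁), w) := by simp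
    rw [h2] at h1
    simp only [map_smul, smul_apply, smul_eq_mul] at h1
    have h3 : fderiv ℝ F u (0, w) w
        = (‖w‖⁻¹ * (‖w‖⁻¹ * fderiv ℝ F u (0, w) w)) * ‖w‖ ^ 2 := by field_simp
    rw [h3]
    gcongr
  -- local strong monotonicity
  have hstrict := (hF.hasStrictFDerivAt one_ne_zero).isLittleO.def (half_pos hc)
  have hdiff : ∀ᶠ p in nhds u, DifferentiableAt ℝ g p := by
    filter_upwards [hg.eventually (by simp)] with p hp using hp.differentiableAt (by norm_num)
  rw [nhds_prod_eq] at hstrict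
  obtain ⟨S, hS, hSF⟩ := (Filter.eventually_prod_self_iff' (r := fun y : (E₁ × E₂) × (E₁ × E₂) =>
    ‖F y.1 - F y.2 - fderiv ℝ F u (y.1 - y.2)‖ ≤ c / 2 * ‖y.1 - y.2‖)).1 hstrict
  obtain ⟨r, hr, hball⟩ := Metric.mem_nhds_iff.1 (Filter.inter_mem hS hdiff)
  rw [← ball_prod_same] at hball
  -- globalisation
  obtain ⟨ρ, hρ, hρψ⟩ := Metric.eventually_nhds_iff_ball.1 (hψC.eventually (by simp))
  let b : ContDiffBump x₀ := ⟨ρ / 4, ρ / 2, by positivity, by linarith⟩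
  let h : E₁ → E₂ := fun x => θ₀ + b x • (ψ x - θ₀)
  have hhψ : ∀ᶠ x in nhds x₀, h x = ψ x := by
    filter_upwards [b.eventuallyEq_one] with x hx
    simp [h, hx]
  have hh0 : h x₀ = θ₀ := by simp [h, hψ0]
  have hhC : ContDiff ℝ 1 h := by
    rw [contDiff_iff_contDiffAt]
    intro x
    by_cases hx : x ∈ Metric.ball x₀ ρ
    · exact contDiffAt_const.add (b.contDiffAt.smul ((hρψ x hx).sub contDiffAt_const))
    · have hx' : x ∉ tsupport b := by
        rw [b.tsupport_eq]
        intro hx2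
        have h1 : dist x x₀ ≤ ρ / 2 := hx2
        exact hx (Metric.mem_ball.2 (by linarith))
      have : h =ᶠ[nhds x] fun _ => θ₀ := by
        filter_upwards [notMem_tsupport_iff_eventuallyEq.1 hx'] with y hy
        simp [h, hy]
      exact contDiffAt_const.congr_of_eventuallyEq this
  have hV : ∀ᶠ x in nhds x₀, h x ∈ Metric.ball θ₀ r :=
    hhC.continuous.continuousAt.eventually (by rw [hh0]; exact Metric.ball_mem_nhds _ hr)
  have hev : ∀ᶠ x in nhds x₀, x ∈ Metric.ball x₀ r ∧ h x ∈ Metric.ball θ₀ r ∧ F (x, h x) = 0 := by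
    filter_upwards [Metric.ball_mem_nhds x₀ hr, hV, hψF, hhψ] with x h1 h2 h3 h4
    exact ⟨h1, h2, by rw [h4]; exact h3⟩
  obtain ⟨U, hUsub, hUo, hxU⟩ := mem_nhds_iff.1 hev
  refine ⟨U, Metric.ball θ₀ r, h, hUo, hxU, Metric.isOpen_ball, Metric.mem_ball_self hr, hhC, hh0,
    fun x hx => ?_⟩
  obtain ⟨hxr, hhr, hF0⟩ := hUsub hx
  refine ⟨hhr, fun θ hθ hne => ?_⟩
  set w := θ - h x with hw
  have hw0 : 0 < ‖w‖ := norm_pos_iff.2 (sub_ne_zero.2 hne)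
  have hmem : ∀ t ∈ Set.Icc (0 : ℝ) 1, h x + t • w ∈ Metric.ball θ₀ r := fun t ht =>
    (convex_ball θ₀ r).add_smul_sub_mem hhr hθ ht
  have hder : ∀ t ∈ Set.Icc (0 : ℝ) 1,
      HasDerivAt (fun t : ℝ => g (x, h x + t • w)) (F (x, h x + t • w) w) t := by
    intro t ht
    have hd : DifferentiableAt ℝ g (x, h x + t • w) := (hball ⟨hxr, hmem t ht⟩).2
    have hl : HasDerivAt (fun t : ℝ => (x, h x + t • w)) ((0 : E₁), w) t := by
      have h1 : HasDerivAt (fun t : ℝ => h x + t • w) w t := by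
        simpa using ((hasDerivAt_id t).smul_const w).const_add (h x)
      exact (hasDerivAt_const t x).prodMk h1
    rw [hF_apply]
    exact hd.hasFDerivAt.comp_hasDerivAt t hl
  have hpos' : ∀ t ∈ Set.Ioo (0 : ℝ) 1, 0 < F (x, h x + t • w) w := by
    intro t ht
    have h1 := hSF (x, h x + t • w) (hball ⟨hxr, hmem t ⟨ht.1.le, ht.2.le⟩⟩).1
      (x, h x) (hball ⟨hxr, hhr⟩).1
    have h2 : (x, h x + t • w) - (x, h x) = t • ((0 : E₁), w) := by simp
    simp only [h2, hF0, sub_zero] at h1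
    have h3 : ‖((0 : E₁), w)‖ = ‖w‖ := by simp [Prod.norm_def]
    rw [norm_smul, h3, Real.norm_of_nonneg ht.1.le] at h1
    have h4 := ContinuousLinearMap.le_of_opNorm_le _ h1 w
    simp only [map_smul, sub_apply, smul_apply,
      smul_eq_mul] at h4
    have h5 := (abs_le.1 h4).1
    have h6 := mul_le_mul_of_nonneg_left (hcoer w) ht.1.le
    have h7 : 0 < c * t * ‖w‖ ^ 2 := by have := ht.1; positivity
    nlinarith
  have hmono : StrictMonoOn (fun t : ℝ => g (x, h x + t • w)) (Set.Icc 0 1) := by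
    refine strictMonoOn_of_deriv_pos (convex_Icc 0 1)
      (fun t ht => (hder t ht).continuousAt.continuousWithinAt) fun t ht => ?_
    rw [interior_Icc] at ht
    rw [(hder t ⟨ht.1.le, ht.2.le⟩).deriv]
    exact hpos' t ht
  have := hmono (Set.left_mem_Icc.2 zero_le_one) (Set.right_mem_Icc.2 zero_le_one) zero_lt_one
  simpa [hw] using this

/-- existence of a smooth local minimizer map / projection function.
If `g` is `C²` near `(x₀, θ₀)`, the partial derivative of `g` in the second variable
vanishes at `(x₀, θ₀)`, and the partial Hessian in the second variable at `(x₀, θ₀)` is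
positive definite, then there are open neighbourhoods `U ∋ x₀` and `V ∋ θ₀` and a `C¹`
map `h` with `h x₀ = θ₀` such that for every `x ∈ U`, `h x` is the unique minimizer
of `θ ↦ g (x, θ)` over `V`. -/
theorem stmt0 (n k : ℕ)
    (g : EuclideanSpace ℝ (Fin n) × EuclideanSpace ℝ (Fin k) → ℝ)
    (x₀ : EuclideanSpace ℝ (Fin n)) (θ₀ : EuclideanSpace ℝ (Fin k))
    (hg : ContDiffAt ℝ 2 g (x₀, θ₀))
    (hcrit : ∀ w : EuclideanSpace ℝ (Fin k), fderiv ℝ g (x₀, θ₀) (0, w) = 0)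
    (hpos : ∀ w : EuclideanSpace ℝ (Fin k), w ≠ 0 →
      0 < fderiv ℝ (fderiv ℝ g) (x₀, θ₀) (0, w) (0, w)) :
    ∃ (U : Set (EuclideanSpace ℝ (Fin n))) (V : Set (EuclideanSpace ℝ (Fin k)))
      (h : EuclideanSpace ℝ (Fin n) → EuclideanSpace ℝ (Fin k)),
      IsOpen U ∧ x₀ ∈ U ∧ IsOpen V ∧ θ₀ ∈ V ∧
      ContDiff ℝ 1 h ∧ h x₀ = θ₀ ∧
      ∀ x ∈ U, h x ∈ V ∧ ∀ θ ∈ V, θ ≠ h x → g (x, h x) < g (x, θ) := by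
  exact aux g x₀ θ₀ hg hcrit hpos
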